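/- arXiv:2303.18104 — 4 statements merged into one kernel-verified Lean document; each statement's English description precedes it below -/
import Mathlib

section
/- Let B ≥ 1 and λ ∈ ℝ, and let Λ be the (B+1)×(B+1) matrix defined in the context. For every natural number m, the entries of the m-th power Λ^m are given by: (Λ^m)_{j,l} = 0 whenever j < l; (Λ^m)_{j,l} = (m choose (j−l)) · λ^{j−l} · (1−λ)^{m−(j−l)} whenever l ≤ j < B and j−l ≤ m; (Λ^m)_{j,l} = 0 whenever l ≤ j < B and j−l > m; and (Λ^m)_{B,l} = 1 − ∑_{j'=0}^{B−1} (Λ^m)_{j',l} for every l. -/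
open Matrix Filter

/-- The `(B+1) × (B+1)` transition matrix `Λ`: diagonal entries `1 - λ` (except the
last one, which is `1`), subdiagonal entries `λ`, all other entries `0`. -/
def Lam (B : ℕ) (lam : ℝ) : Matrix (Fin (B+1)) (Fin (B+1)) ℝ :=
  Matrix.of fun j l =>
    if (j : ℕ) = (l : ℕ) then (if (j : ℕ) < B then 1 - lam else 1)
    else if (j : ℕ) = (l : ℕ) + 1 then lam
    else 0

theorem Lam_mul_zero (B : ℕ) (hB : 1 ≤ B) (lam : ℝ) (M : Matrix (Fin (B+1)) (Fin (B+1)) ℝ)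
    (l : Fin (B+1)) : (Lam B lam * M) 0 l = (1 - lam) * M 0 l := by
  rw [Matrix.mul_apply, Finset.sum_eq_single 0]
  · have : 0 < B := hB
    simp [Lam, this]
  · intro b _ hb
    have : (b : ℕ) ≠ 0 := fun h => hb (Fin.ext h)
    simp [Lam, this.symm]
  · simp

theorem Lam_mul_succ (B : ℕ) (lam : ℝ) (M : Matrix (Fin (B+1)) (Fin (B+1)) ℝ)
    (j : ℕ) (hj : j + 1 < B) (l : Fin (B+1)) :
    (Lam B lam * M) ⟨j+1, by omega⟩ l
      = (1 - lam) * M ⟨j+1, by omega⟩ l + lam * M ⟨j, by omega⟩ l := by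
  have hne : (⟨j+1, by omega⟩ : Fin (B+1)) ≠ ⟨j, by omega⟩ := by simp
  rw [Matrix.mul_apply, Finset.sum_eq_add_of_mem _ _ (Finset.mem_univ _) (Finset.mem_univ _) hne]
  · simp [Lam, hj]
  · rintro b _ ⟨h1, h2⟩
    have h1' : ¬ (j + 1 = (b : ℕ)) := fun h => h1 (Fin.ext h.symm)
    have h2' : ¬ (j = (b : ℕ)) := fun h => h2 (Fin.ext h.symm)
    simp [Lam, h1', h2']

theorem Lam_col_sum (B : ℕ) (lam : ℝ) (l : Fin (B+1)) : ∑ j, Lam B lam j l = 1 := by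
  by_cases hl : (l : ℕ) < B
  · have hne : l ≠ ⟨l+1, by omega⟩ := by
      intro h
      have := congrArg Fin.val h
      simp at this
    rw [Finset.sum_eq_add_of_mem _ _ (Finset.mem_univ _) (Finset.mem_univ _) hne]
    · simp [Lam, hl]
    · rintro b _ ⟨h1, h2⟩
      have h1' : ¬ ((b : ℕ) = l) := fun h => h1 (Fin.ext h)
      have h2' : ¬ ((b : ℕ) = l + 1) := fun h => h2 (Fin.ext h)
      simp [Lam, h1', h2']
  · rw [Finset.sum_eq_single l]
    · simp [Lam, hl]
    · intro b _ h1
      have h1' : ¬ ((b : ℕ) = l) := fun h => h1 (Fin.ext h)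
      have h2' : ¬ ((b : ℕ) = l + 1) := by omega
      simp [Lam, h1', h2']
    · simp

theorem Lam_pow_col_sum (B : ℕ) (lam : ℝ) (m : ℕ) (l : Fin (B+1)) :
    ∑ j, (Lam B lam ^ m) j l = 1 := by
  induction m with
  | zero => simp [Matrix.one_apply]
  | succ m ih =>
    simp only [pow_succ', Matrix.mul_apply]
    rw [Finset.sum_comm]
    simp only [← Finset.sum_mul, Lam_col_sum, one_mul, ih]

theorem Lam_pow_entry (B : ℕ) (hB : 1 ≤ B) (lam : ℝ) (m : ℕ) (l : Fin (B+1)) :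
    ∀ (j : ℕ) (hj : j < B), (Lam B lam ^ m) ⟨j, by omega⟩ l =
      if j < (l : ℕ) then 0 else
        (m.choose (j - l) : ℝ) * lam ^ (j - (l : ℕ)) * (1 - lam) ^ (m - (j - (l : ℕ))) := by
  induction m with
  | zero =>
    intro j hj
    rw [pow_zero, Matrix.one_apply]
    rcases lt_trichotomy j (l : ℕ) with h | h | h
    · rw [if_neg (fun e => by rw [← e] at h; simp at h), if_pos h]
    · rw [if_pos (Fin.ext h), if_neg (by omega)]
      simp [h]
    · rw [if_neg (fun e => by rw [← e] at h; simp at h), if_neg (by omega),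
        Nat.choose_eq_zero_of_lt (by omega)]
      simp
  | succ m ih =>
    intro j hj
    rw [pow_succ']
    cases j with
    | zero =>
      have := ih 0 hj
      refine (Lam_mul_zero B hB lam _ l).trans ?_
      change _ * (Lam B lam ^ m) ⟨0, _⟩ l = _
      rw [this]
      split_ifs
      · simp
      · simp [pow_succ']
    | succ j =>
      rw [Lam_mul_succ B lam _ j hj l, ih _ hj, ih j (by omega)]
      rcases lt_trichotomy (j + 1) (l : ℕ) with h | h | h
      · rw [if_pos h, if_pos (by omega), if_pos h]
        simp
      · rw [if_neg (by omega), if_pos (by omega), if_neg (by omega)]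
        simp [h, pow_succ']
      · rw [if_neg (by omega), if_neg (by omega), if_neg (by omega)]
        obtain ⟨d, hd⟩ : ∃ d, j = l + d := ⟨j - l, by omega⟩
        have e1 : j + 1 - (l : ℕ) = d + 1 := by omega
        have e2 : j - (l : ℕ) = d := by omega
        rw [e1, e2, Nat.choose_succ_succ, Nat.add_sub_add_right]
        by_cases hdm : d + 1 ≤ m
        · obtain ⟨k, rfl⟩ : ∃ k, m = d + 1 + k := ⟨m - (d+1), by omega⟩
          have e3 : d + 1 + k - (d + 1) = k := by omega
          have e4 : d + 1 + k - d = k + 1 := by omega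
          rw [e3, e4]
          push_cast
          ring
        · rw [Nat.choose_eq_zero_of_lt (show m < d + 1 by omega)]
          push_cast
          ring

/-- Explicit form of the entries of the m-th power of Λ. -/
theorem entries_of_Lam_pow (B : ℕ) (hB : 1 ≤ B) (lam : ℝ) (m : ℕ) :
    (∀ j l : Fin (B+1), (j : ℕ) < (l : ℕ) → (Lam B lam ^ m) j l = 0) ∧
    (∀ j l : Fin (B+1), (l : ℕ) ≤ (j : ℕ) → (j : ℕ) < B → (j : ℕ) - (l : ℕ) ≤ m →
      (Lam B lam ^ m) j l =
        (m.choose ((j : ℕ) - (l : ℕ)) : ℝ) * lam ^ ((j : ℕ) - (l : ℕ)) *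
          (1 - lam) ^ (m - ((j : ℕ) - (l : ℕ)))) ∧
    (∀ j l : Fin (B+1), (l : ℕ) ≤ (j : ℕ) → (j : ℕ) < B → m < (j : ℕ) - (l : ℕ) →
      (Lam B lam ^ m) j l = 0) ∧
    (∀ l : Fin (B+1),
      (Lam B lam ^ m) (Fin.last B) l =
        1 - ∑ j' : Fin B, (Lam B lam ^ m) (Fin.castSucc j') l) := by
  have key := Lam_pow_entry B hB lam m
  refine ⟨fun j l h => ?_, fun j l h hj hm => ?_, fun j l h hj hm => ?_, fun l => ?_⟩
  · have := key l j (by omega)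
    rwa [if_pos h] at this
  · have := key l j hj
    rwa [if_neg (by omega)] at this
  · have := key l j hj
    rw [if_neg (by omega), Nat.choose_eq_zero_of_lt hm] at this
    simpa using this
  · have := Lam_pow_col_sum B lam m l
    rw [Fin.sum_univ_castSucc] at this
    linarith
end

section
/- Let B ≥ 1 and λ ∈ ℝ, and let Λ be the (B+1)×(B+1) matrix defined in the context. For every natural number m and every column index l ∈ {0,…,B}, the last-row entry of Λ^m has the explicit form (Λ^m)_{B,l} = 1 − ∑_{k=0}^{B−1−l} (m choose k) · λ^k · (1−λ)^{m−k}, where the sum ranges over those k ∈ {0,…,B−1−l} with k ≤ m (equivalently, terms with k > m are zero since (m choose k) = 0). -/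
open Matrix Filter

lemma binom_term_succ (x : ℝ) (m k : ℕ) :
    ((m+1).choose (k+1) : ℝ) * x ^ (k+1) * (1 - x) ^ (m + 1 - (k+1)) =
      (1 - x) * ((m.choose (k+1) : ℝ) * x ^ (k+1) * (1 - x) ^ (m - (k+1))) +
        x * ((m.choose k : ℝ) * x ^ k * (1 - x) ^ (m - k)) := by
  rw [Nat.choose_succ_succ, Nat.add_sub_add_right]
  push_cast
  rcases Nat.lt_or_ge m (k+1) with h | h
  · rw [Nat.choose_eq_zero_of_lt h]
    push_cast
    ring
  · obtain ⟨d, rfl⟩ := Nat.exists_eq_add_of_le h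
    have h1 : k + 1 + d - k = d + 1 := by omega
    have h2 : k + 1 + d - (k + 1) = d := by omega
    rw [h1, h2]
    ring

lemma binom_sum_succ (x : ℝ) (m n : ℕ) :
    ∑ k ∈ Finset.range (n+1), ((m+1).choose k : ℝ) * x ^ k * (1 - x) ^ (m + 1 - k) =
      (1 - x) * ∑ k ∈ Finset.range (n+1), (m.choose k : ℝ) * x ^ k * (1 - x) ^ (m - k) +
        x * ∑ k ∈ Finset.range n, (m.choose k : ℝ) * x ^ k * (1 - x) ^ (m - k) := by
  induction n with
  | zero => simp [pow_succ]; ring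
  | succ n ih =>
    rw [Finset.sum_range_succ, ih, binom_term_succ,
      Finset.sum_range_succ _ (n+1), Finset.sum_range_succ _ n]
    ring

/-- Explicit form of the last-row entries of the m-th power of Λ. -/
theorem Lam_pow_last_row (B : ℕ) (hB : 1 ≤ B) (lam : ℝ) (m : ℕ) (l : Fin (B+1)) :
    (Lam B lam ^ m) (Fin.last B) l =
      1 - ∑ k ∈ Finset.range (B - (l : ℕ)),
        (m.choose k : ℝ) * lam ^ k * (1 - lam) ^ (m - k) := by
  induction m generalizing l with
  | zero =>
    rw [pow_zero, Matrix.one_apply]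
    rcases Nat.lt_or_ge (l : ℕ) B with h | h
    · obtain ⟨n, hn⟩ : ∃ n, B - (l : ℕ) = n + 1 := ⟨B - l - 1, by omega⟩
      rw [hn, Finset.sum_range_succ', if_neg]
      · simp
      · intro h'
        have := congrArg Fin.val h'
        simp at this
        omega
    · have : l = Fin.last B := by
        apply Fin.ext
        have := l.2
        simp
        omega
      simp [this]
  | succ m ih =>
    rw [pow_succ, Matrix.mul_apply]
    rcases Nat.lt_or_ge (l : ℕ) B with h | h
    · obtain ⟨n, hn⟩ : ∃ n, B - (l : ℕ) = n + 1 := ⟨B - l - 1, by omega⟩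
      have hs : (l : ℕ) + 1 < B + 1 := by omega
      have hne : l ≠ ⟨l + 1, hs⟩ := by
        intro h'
        have := congrArg Fin.val h'
        simp at this
      rw [Fintype.sum_eq_add l ⟨l + 1, hs⟩ hne, ih, ih]
      · have hn' : B - ((l : ℕ) + 1) = n := by omega
        simp only [hn, hn', binom_sum_succ]
        simp [Lam, h]
        ring
      · rintro x ⟨h1, h2⟩
        have h1' : (x : ℕ) ≠ l := fun e => h1 (Fin.ext e)
        have h2' : (x : ℕ) ≠ l + 1 := fun e => h2 (Fin.ext e)
        simp only [Lam, Matrix.of_apply]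
        rw [if_neg h1', if_neg h2', mul_zero]
    · have hl : (l : ℕ) = B := by have := l.2; omega
      rw [Fintype.sum_eq_single l, ih]
      · simp [Lam, hl]
      · intro x h1
        have h1' : (x : ℕ) ≠ l := fun e => h1 (Fin.ext e)
        have h2' : (x : ℕ) ≠ l + 1 := by have := x.2; omega
        simp only [Lam, Matrix.of_apply]
        rw [if_neg h1', if_neg h2', mul_zero]
end

section
/- Let B ≥ 1 and λ ∈ ℝ with 0 < λ ≤ 1, and let Λ be the (B+1)×(B+1) matrix defined in the context. For every vector β ∈ ℝ^{B+1} with nonnegative entries summing to 1 (a probability vector), the sequence of vectors Λ^m β converges entrywise, as m → ∞, to the standard basis vector e_B = (0,0,…,0,1)^T. -/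
open Matrix Filter

theorem Lam_castSucc (B : ℕ) (lam : ℝ) (i : Fin (B+1)) (l : Fin B) :
    Lam B lam i l.castSucc =
      (if i = l.castSucc then 1 - lam else 0) + (if i = l.succ then lam else 0) := by
  have := l.2
  simp only [Lam, Matrix.of_apply, Fin.ext_iff, Fin.val_castSucc, Fin.val_succ]
  split_ifs <;> first | omega | simp

theorem Lam_last (B : ℕ) (lam : ℝ) (i : Fin (B+1)) :
    Lam B lam i (Fin.last B) = (if i = Fin.last B then 1 else 0) := by
  have := i.2
  simp only [Lam, Matrix.of_apply, Fin.ext_iff, Fin.val_last]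
  split_ifs <;> first | omega | simp

theorem Lam_weighted (B : ℕ) (lam : ℝ) (v w : Fin (B+1) → ℝ) :
    ∑ i, w i * (Lam B lam).mulVec v i =
      ∑ i, w i * v i - lam * ∑ l : Fin B, (w l.castSucc - w l.succ) * v l.castSucc := by
  have h : ∑ i, w i * (Lam B lam).mulVec v i = ∑ l, (∑ i, w i * Lam B lam i l) * v l := by
    simp only [Matrix.mulVec, dotProduct, Finset.mul_sum, Finset.sum_mul]
    rw [Finset.sum_comm]
    simp only [mul_assoc]
  rw [h, Fin.sum_univ_castSucc, Fin.sum_univ_castSucc (fun i => w i * v i)]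
  simp only [Lam_castSucc, Lam_last, mul_add, Finset.sum_add_distrib, mul_ite, mul_zero,
    Finset.sum_ite_eq', Finset.mem_univ, if_true, mul_one]
  rw [Finset.mul_sum, add_sub_right_comm, ← Finset.sum_sub_distrib]
  congr 1
  exact Finset.sum_congr rfl fun l _ => by ring

/-- For 0 < λ ≤ 1 and any probability vector β, the vectors (Λ^m) β converge
entrywise to the standard basis vector (0, …, 0, 1). -/
theorem Lam_pow_mulVec_tendsto (B : ℕ) (hB : 1 ≤ B) (lam : ℝ)
    (h0 : 0 < lam) (h1 : lam ≤ 1) (beta : Fin (B+1) → ℝ)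
    (hnonneg : ∀ i, 0 ≤ beta i) (hsum : ∑ i, beta i = 1) (j : Fin (B+1)) :
    Filter.Tendsto (fun m : ℕ => ((Lam B lam ^ m).mulVec beta) j) Filter.atTop
      (nhds (if j = Fin.last B then 1 else 0)) := by
  have hpos : ∀ i l, 0 ≤ Lam B lam i l := by
    intro i l
    simp only [Lam, Matrix.of_apply]
    split_ifs <;> linarith
  obtain ⟨v, hv⟩ : ∃ v : ℕ → Fin (B+1) → ℝ, v = fun m => (Lam B lam ^ m).mulVec beta := ⟨_, rfl⟩
  have hv0 : v 0 = beta := by simp [hv]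
  have hvs : ∀ m, v (m+1) = (Lam B lam).mulVec (v m) := by
    intro m
    simp [hv, pow_succ']
  have hvn : ∀ m i, 0 ≤ v m i := by
    intro m
    induction m with
    | zero => simpa [hv0] using hnonneg
    | succ m ih =>
      intro i
      rw [hvs]
      simp only [Matrix.mulVec, dotProduct]
      exact Finset.sum_nonneg fun l _ => mul_nonneg (hpos i l) (ih l)
  have hv1 : ∀ m, ∑ i, v m i = 1 := by
    intro m
    induction m with
    | zero => simpa [hv0] using hsum
    | succ m ih =>
      have := Lam_weighted B lam (v m) (fun _ => 1)
      simp only [one_mul, sub_self, zero_mul, Finset.sum_const_zero, mul_zero, sub_zero] at this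
      rw [hvs, this, ih]
  have hlt : ∀ k : Fin B, Tendsto (fun m => v m k.castSucc) atTop (nhds 0) := by
    intro k
    let S : ℕ → ℝ := fun m => ∑ i, (if i ≤ k.castSucc then 1 else 0) * v m i
    have hS : ∀ m, S (m+1) = S m - lam * v m k.castSucc := by
      intro m
      simp only [S]
      rw [hvs, Lam_weighted]
      congr 2
      rw [Finset.sum_eq_single k]
      · simp [Fin.le_def]
      · intro l _ hl
        have hl' : (l : ℕ) ≠ k := fun h => hl (Fin.ext h)
        simp only [Fin.le_def, Fin.val_castSucc, Fin.val_succ]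
        split_ifs <;> first | omega | simp
      · simp
    have hanti : Antitone S := antitone_nat_of_succ_le fun m => by
      rw [hS]
      have := mul_nonneg h0.le (hvn m k.castSucc)
      linarith
    have hbdd : BddBelow (Set.range S) := ⟨0, by
      rintro _ ⟨m, rfl⟩
      exact Finset.sum_nonneg fun i _ => mul_nonneg (by split_ifs <;> norm_num) (hvn m i)⟩
    have hc := tendsto_atTop_ciInf hanti hbdd
    have hc' := (hc.sub (hc.comp (tendsto_add_atTop_nat 1))).const_mul lam⁻¹
    rw [sub_self, mul_zero] at hc'
    refine hc'.congr fun m => ?_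
    simp only [Function.comp, hS]
    field_simp
    ring
  have key : Tendsto (fun m => v m j) atTop (nhds (if j = Fin.last B then 1 else 0)) := by
    induction j using Fin.lastCases with
    | last =>
      have h := (tendsto_finsetSum (Finset.univ : Finset (Fin B)) fun k _ => hlt k).const_sub 1
      simp only [Finset.sum_const_zero, sub_zero] at h
      simp only [if_true]
      refine h.congr fun m => ?_
      rw [← hv1 m, Fin.sum_univ_castSucc]
      ring
    | cast k =>
      simpa [Fin.castSucc_ne_last] using hlt k
  simpa [hv] using key
end

section
/- Let B ≥ 1 and λ ∈ ℝ with 0 < λ ≤ 1, and let Λ be the (B+1)×(B+1) matrix defined in the context. Then consecutive powers of Λ become arbitrarily close: for all indices j, l ∈ {0,…,B}, the sequence (Λ^{m+1})_{j,l} − (Λ^m)_{j,l} converges to 0 as m → ∞. -/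
open Matrix Filter

theorem summable_aux (a : ℝ) (x b : ℕ → ℝ) (ha1 : a < 1) (hx : ∀ m, 0 ≤ x m)
    (hb0 : ∀ m, 0 ≤ b m) (hb : Summable b) (h : ∀ m, x (m + 1) = a * x m + b m) :
    Summable x := by
  refine summable_of_sum_range_le (c := (x 0 + ∑' m, b m) / (1 - a)) hx fun n => ?_
  rw [le_div_iff₀ (by linarith)]
  have e1 : ∑ i ∈ Finset.range n, x (i + 1)
      = a * ∑ i ∈ Finset.range n, x i + ∑ i ∈ Finset.range n, b i := by
    rw [Finset.mul_sum, ← Finset.sum_add_distrib]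
    exact Finset.sum_congr rfl fun i _ => h i
  have e2 := Finset.sum_range_succ x n
  rw [Finset.sum_range_succ'] at e2
  have e3 : ∑ i ∈ Finset.range n, b i ≤ ∑' m, b m := hb.sum_le_tsum _ fun i _ => hb0 i
  have e4 := hx n
  nlinarith

theorem Lam_nonneg_aux (B : ℕ) (lam : ℝ) (h0 : 0 < lam) (h1 : lam ≤ 1) (m : ℕ)
    (j l : Fin (B+1)) : 0 ≤ (Lam B lam ^ m) j l := by
  induction m generalizing j l with
  | zero =>
    rw [pow_zero, Matrix.one_apply]
    split_ifs <;> norm_num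
  | succ m ih =>
    rw [pow_succ', Matrix.mul_apply]
    refine Finset.sum_nonneg fun k _ => mul_nonneg ?_ (ih k l)
    simp only [Lam, Matrix.of_apply]
    split_ifs <;> linarith

theorem Lam_row_zero_aux (B : ℕ) (lam : ℝ) (m : ℕ) (h : 0 < B + 1) (l : Fin (B+1)) :
    (Lam B lam ^ (m + 1)) ⟨0, h⟩ l
      = (if 0 < B then 1 - lam else 1) * (Lam B lam ^ m) ⟨0, h⟩ l := by
  rw [pow_succ', Matrix.mul_apply, Finset.sum_eq_single ⟨0, h⟩]
  · congr 1
  · intro k _ hk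
    have hk' : (0 : ℕ) ≠ k := fun e => hk (Fin.ext e.symm)
    simp [Lam, hk']
  · simp

theorem Lam_row_succ_aux (B : ℕ) (lam : ℝ) (m i : ℕ) (h : i + 1 < B + 1) (l : Fin (B+1)) :
    (Lam B lam ^ (m + 1)) ⟨i + 1, h⟩ l
      = (if i + 1 < B then 1 - lam else 1) * (Lam B lam ^ m) ⟨i + 1, h⟩ l
        + lam * (Lam B lam ^ m) ⟨i, by omega⟩ l := by
  rw [pow_succ', Matrix.mul_apply,
    Fintype.sum_eq_add (⟨i + 1, h⟩ : Fin (B+1)) ⟨i, by omega⟩ (by simp)]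
  · simp [Lam]
  · rintro k ⟨hk1, hk2⟩
    have h1 : i + 1 ≠ (k : ℕ) := fun e => hk1 (Fin.ext e.symm)
    have h2 : i ≠ (k : ℕ) := fun e => hk2 (Fin.ext e.symm)
    simp [Lam, h1, h2]

theorem Lam_summable_aux (B : ℕ) (lam : ℝ) (h0 : 0 < lam) (h1 : lam ≤ 1) (l : Fin (B+1))
    (i : ℕ) (hi : i < B) : Summable fun m : ℕ => (Lam B lam ^ m) ⟨i, by omega⟩ l := by
  induction i with
  | zero =>
    refine summable_aux (1 - lam) _ (fun _ => 0) (by linarith)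
      (fun m => Lam_nonneg_aux B lam h0 h1 m _ l) (fun _ => le_rfl) summable_zero fun m => ?_
    rw [Lam_row_zero_aux, if_pos hi, add_zero]
  | succ i ih =>
    refine summable_aux (1 - lam) _ (fun m => lam * (Lam B lam ^ m) ⟨i, by omega⟩ l)
      (by linarith) (fun m => Lam_nonneg_aux B lam h0 h1 m _ l)
      (fun m => mul_nonneg h0.le (Lam_nonneg_aux B lam h0 h1 m _ l))
      ((ih (by omega)).mul_left lam) fun m => ?_
    rw [Lam_row_succ_aux, if_pos hi]

/-- For 0 < λ ≤ 1, consecutive powers of Λ become arbitrarily close entrywise. -/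
theorem Lam_pow_succ_sub_tendsto_zero (B : ℕ) (hB : 1 ≤ B) (lam : ℝ)
    (h0 : 0 < lam) (h1 : lam ≤ 1) (j l : Fin (B+1)) :
    Filter.Tendsto (fun m : ℕ => (Lam B lam ^ (m + 1)) j l - (Lam B lam ^ m) j l)
      Filter.atTop (nhds 0) := by
  obtain ⟨j, hj⟩ := j
  rcases Nat.lt_or_ge j B with h | h
  · have t := (Lam_summable_aux B lam h0 h1 l j h).tendsto_atTop_zero
    simpa using (t.comp (tendsto_add_atTop_nat 1)).sub t
  · obtain ⟨i, rfl⟩ : ∃ i, j = i + 1 := ⟨j - 1, by omega⟩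
    have t := (Lam_summable_aux B lam h0 h1 l i (by omega)).tendsto_atTop_zero.const_mul lam
    rw [mul_zero] at t
    refine t.congr fun m => ?_
    rw [Lam_row_succ_aux, if_neg (by omega)]
    ring
end
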